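/- Let Λ be a real number and let H : ℝ → ℝ be differentiable with H(t) ≠ 0 for all t. Define 𝕋(t) = −6·H(t)², B(t) = −6·(H'(t) + 3·H(t)²), and consider the model with g = 0 and h(T) = −Λ/(3T), i.e. F(t) = B(t)·h(𝕋(t)), F_𝕋(t) = B(t)·h'(𝕋(t)), F_B(t) = h(𝕋(t)). Then for every t, 𝕋(t)·F_𝕋(t) − F(t)/2 + (1/2)·F_B(t)·B(t) + 3·H(t)·(d/dt)[h(𝕋(t))] = Λ. -/

import Mathlib

/-!
For `F(𝕋, B) = B h(𝕋)` the two terms without derivatives of `h` cancel, and both remaining ones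
carry a factor `h'(𝕋)`, so that `ρ_DE = (𝕋 B + 3 H 𝕋') h'(𝕋)`. Since `𝕋' = -12 H H'`, the terms in
`H'` cancel as well and `ρ_DE = 3 𝕋² h'(𝕋)`, which is the constant `Λ` exactly when
`h'(𝕋) = Λ / (3 𝕋²)`, as for `h(𝕋) = -Λ / (3 𝕋)`.
-/

section

variable {𝕜 : Type*} [NontriviallyNormedField 𝕜]

/-- The torsion scalar `𝕋 = -6 H²` of the spatially flat FLRW background with Hubble function `H`,
as a function of time. -/
def torsionScalar (H : 𝕜 → 𝕜) (t : 𝕜) : 𝕜 :=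
  -6 * H t ^ 2

/-- The boundary term `B = -6 (H' + 3 H²)` of the spatially flat FLRW background with Hubble
function `H`, as a function of time. -/
noncomputable def boundaryTerm (H : 𝕜 → 𝕜) (t : 𝕜) : 𝕜 :=
  -6 * (deriv H t + 3 * H t ^ 2)

/-- The effective dark energy density `𝕋 F_𝕋 - F / 2 + F_B B / 2 + 3 H (d/dt) F_B` of the model
`f(𝕋, B) = 𝕋 + F(𝕋, B)` at time `t`. The arguments of `F` are the torsion scalar and the boundary
term, in this order; the partial derivatives are values of `deriv`, hence `0` where `F` is not
differentiable in the variable concerned. -/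
noncomputable def darkEnergyDensity (F : 𝕜 → 𝕜 → 𝕜) (H : 𝕜 → 𝕜) (t : 𝕜) : 𝕜 :=
  torsionScalar H t * deriv (fun x => F x (boundaryTerm H t)) (torsionScalar H t)
    - F (torsionScalar H t) (boundaryTerm H t) / 2
    + (1 / 2) * deriv (F (torsionScalar H t)) (boundaryTerm H t) * boundaryTerm H t
    + 3 * H t * deriv (fun s => deriv (F (torsionScalar H s)) (boundaryTerm H s)) t

variable {H : 𝕜 → 𝕜} {t : 𝕜}

theorem torsionScalar_ne_zero [CharZero 𝕜] (hHt : H t ≠ 0) : torsionScalar H t ≠ 0 :=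
  mul_ne_zero (by norm_num) (pow_ne_zero 2 hHt)

theorem hasDerivAt_torsionScalar {H' : 𝕜} (hH : HasDerivAt H H' t) :
    HasDerivAt (torsionScalar H) (-12 * H t * H') t := by
  refine ((hH.fun_pow 2).const_mul (-6)).congr_deriv ?_
  push_cast
  ring

theorem torsionScalar_mul_boundaryTerm_add_deriv (hH : DifferentiableAt 𝕜 H t) :
    torsionScalar H t * boundaryTerm H t + 3 * H t * deriv (torsionScalar H) t
      = 3 * torsionScalar H t ^ 2 := by
  rw [(hasDerivAt_torsionScalar hH.hasDerivAt).deriv, torsionScalar, boundaryTerm]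
  ring

theorem darkEnergyDensity_mul (h H : 𝕜 → 𝕜) (t : 𝕜) :
    darkEnergyDensity (fun x y => y * h x) H t
      = torsionScalar H t * (boundaryTerm H t * deriv h (torsionScalar H t))
        - boundaryTerm H t * h (torsionScalar H t) / 2
        + (1 / 2) * h (torsionScalar H t) * boundaryTerm H t
        + 3 * H t * deriv (fun s => h (torsionScalar H s)) t := by
  simp only [darkEnergyDensity, deriv_const_mul_field, deriv_mul_const_field, deriv_id'', one_mul]

theorem darkEnergyDensity_mul_eq_three_mul_sq_mul_deriv {h : 𝕜 → 𝕜}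
    (hh : DifferentiableAt 𝕜 h (torsionScalar H t)) (hH : DifferentiableAt 𝕜 H t) :
    darkEnergyDensity (fun x y => y * h x) H t
      = 3 * torsionScalar H t ^ 2 * deriv h (torsionScalar H t) := by
  have chain_rule : deriv (fun s => h (torsionScalar H s)) t
      = deriv h (torsionScalar H t) * deriv (torsionScalar H) t :=
    deriv_comp t hh (hasDerivAt_torsionScalar hH.hasDerivAt).differentiableAt
  rw [darkEnergyDensity_mul, chain_rule, ← torsionScalar_mul_boundaryTerm_add_deriv hH]
  ring

theorem hasDerivAt_div_const_mul (c a : 𝕜) {x : 𝕜} (hx : x ≠ 0) :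
    HasDerivAt (fun y => c / (a * y)) (-c / (a * x ^ 2)) x := by
  have h_eq : (fun y => c / (a * y)) = fun y => c / a * y⁻¹ :=
    funext fun y => by rw [← div_div, div_eq_mul_inv (c / a)]
  rw [h_eq]
  refine ((hasDerivAt_inv hx).const_mul (c / a)).congr_deriv ?_
  rw [← div_div, neg_div, neg_div, div_eq_mul_inv (c / a), mul_neg]

theorem stmt_3_general [CharZero 𝕜] (Λ : 𝕜) (hH : DifferentiableAt 𝕜 H t) (hHt : H t ≠ 0) :
    darkEnergyDensity (fun x y => y * (-Λ / (3 * x))) H t = Λ := by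
  have hT : torsionScalar H t ≠ 0 := torsionScalar_ne_zero hHt
  have hderiv := hasDerivAt_div_const_mul (-Λ) 3 hT
  rw [darkEnergyDensity_mul_eq_three_mul_sq_mul_deriv hderiv.differentiableAt hH, hderiv.deriv,
    neg_neg]
  exact mul_div_cancel₀ Λ (mul_ne_zero three_ne_zero (pow_ne_zero 2 hT))

end

/-- The model f(𝕋,B) = 𝕋 − ΛB/(3𝕋), i.e. g = 0 and h(T) = −Λ/(3T), has dark energy
density identically Λ for any Hubble function H. -/
theorem stmt_3 (Λ : ℝ) (H : ℝ → ℝ) (hH : Differentiable ℝ H) (hHne : ∀ t, H t ≠ 0)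
    (T B h : ℝ → ℝ)
    (hT : ∀ t, T t = -6 * H t ^ 2)
    (hB : ∀ t, B t = -6 * (deriv H t + 3 * H t ^ 2))
    (hh : h = fun x => -Λ / (3 * x)) :
    ∀ t, T t * (B t * deriv h (T t)) - (B t * h (T t)) / 2
        + (1 / 2) * h (T t) * B t + 3 * H t * deriv (fun s => h (T s)) t = Λ := by
  intro t
  obtain rfl : T = torsionScalar H := funext hT
  obtain rfl : B = boundaryTerm H := funext hB
  subst hh
  exact (darkEnergyDensity_mul _ H t).symm.trans (stmt_3_general Λ (hH t) (hHne t))
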